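/- Let f(X) = 2X(X² − 1) ∈ ℚ[X]. Then the set {α ∈ ℚ : there exist an integer n ≥ 1, an integer ℓ with ℓ ≠ 0 and ℓ ≠ 1, and a ∈ ℤ such that f^(n)(α) = a^ℓ · α} is infinite; indeed, already the set {r ∈ ℤ : f(r) = a² · r for some a ∈ ℤ} is infinite, since f(r) = (2s)² · r for every pair of integers (r, s) with r² − 2s² = 1. -/

import Mathlib

open Polynomial

/-!
On the conic `X ^ 2 - d * Y ^ 2 = 1` we have
`d * X * (X ^ 2 - 1) = d * X * (d * Y ^ 2) = (d * Y) ^ 2 * X`, so every integer point `(r, s)` gives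
`f(r) = (d * s) ^ 2 * r`. For positive nonsquare `d`, the powers of a solution of Pell's equation
with `1 < r` have strictly increasing first coordinates, hence there are infinitely many such `r`.
-/

open Pell

lemma strictMono_x_pow_of_pos {d : ℤ} {u : Solution₁ d} (hx : 1 < u.x) (hy : 0 < u.y) :
    StrictMono fun n : ℕ ↦ (u ^ n).x := by
  refine strictMono_nat_of_lt_succ fun n ↦ ?_
  have hd : 0 < d := Solution₁.d_pos_of_one_lt_x hx
  have hxn : 0 < (u ^ n).x := Solution₁.x_pow_pos (zero_lt_one.trans hx) n
  have hyn : 0 ≤ (u ^ n).y := by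
    cases n with
    | zero => simp
    | succ m => exact (Solution₁.y_pow_succ_pos (zero_lt_one.trans hx) hy m).le
  calc (u ^ n).x < (u ^ n).x * u.x := lt_mul_of_one_lt_right hxn hx
    _ ≤ (u ^ n).x * u.x + d * ((u ^ n).y * u.y) := le_add_of_nonneg_right (by positivity)
    _ = (u ^ (n + 1)).x := by rw [pow_succ, Solution₁.x_mul]

lemma infinite_setOf_exists_sq_sub_mul_sq_eq_one {d : ℤ} (hd : 0 < d) (hsq : ¬IsSquare d) :
    {r : ℤ | ∃ s : ℤ, r ^ 2 - d * s ^ 2 = 1}.Infinite := by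
  obtain ⟨u, hx, hy⟩ := Solution₁.exists_pos_of_not_isSquare hd hsq
  exact Set.infinite_of_injective_forall_mem (strictMono_x_pow_of_pos hx hy).injective
    fun n ↦ ⟨(u ^ n).y, (u ^ n).prop⟩

lemma eval_C_mul_X_mul_X_sq_sub_one_of_sq_sub_mul_sq_eq_one {R : Type*} [CommRing R] {d x y : R}
    (h : x ^ 2 - d * y ^ 2 = 1) : (C d * X * (X ^ 2 - 1)).eval x = (d * y) ^ 2 * x := by
  simp only [eval_mul, eval_C, eval_X, eval_sub, eval_pow, eval_one]
  linear_combination d * x * h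

lemma infinite_setOf_iterate_eq_zpow_mul {K : Type*} [DivisionRing K] [CharZero K] {g : K → K}
    {n m : ℕ} (hn : 1 ≤ n) (hm₀ : m ≠ 0) (hm₁ : m ≠ 1)
    (h : {r : ℤ | ∃ a : ℤ, g^[n] (r : K) = (a : K) ^ m * (r : K)}.Infinite) :
    {α : K | ∃ (n : ℕ) (ℓ : ℤ) (a : ℤ), 1 ≤ n ∧ ℓ ≠ 0 ∧ ℓ ≠ 1 ∧
      (ℓ < 0 → (a : K) ≠ 0) ∧ g^[n] α = (a : K) ^ ℓ * α}.Infinite := by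
  refine (h.image (Int.cast_injective (α := K)).injOn).mono ?_
  rintro _ ⟨r, ⟨a, ha⟩, rfl⟩
  exact ⟨n, m, a, hn, mod_cast hm₀, mod_cast hm₁, fun hm ↦ absurd hm (by lia),
    by rw [ha, zpow_natCast]⟩

theorem stmt_10_general {K : Type*} [Field K] [CharZero K] {d : ℤ} (hd : 0 < d)
    (hsq : ¬IsSquare d) (f : K[X]) (hf : f = C (d : K) * X * (X ^ 2 - 1)) :
    {α : K | ∃ (n : ℕ) (ℓ : ℤ) (a : ℤ), 1 ≤ n ∧ ℓ ≠ 0 ∧ ℓ ≠ 1 ∧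
      (ℓ < 0 → (a : K) ≠ 0) ∧ f.eval^[n] α = (a : K) ^ ℓ * α}.Infinite ∧
    {r : ℤ | ∃ a : ℤ, f.eval (r : K) = (a : K) ^ 2 * (r : K)}.Infinite ∧
    ∀ r s : ℤ, r ^ 2 - d * s ^ 2 = 1 → f.eval (r : K) = ((d * s : ℤ) : K) ^ 2 * (r : K) := by
  have eval_of_pell (r s : ℤ) (h : r ^ 2 - d * s ^ 2 = 1) :
      f.eval (r : K) = ((d * s : ℤ) : K) ^ 2 * (r : K) := by
    rw [hf, Int.cast_mul]
    exact eval_C_mul_X_mul_X_sq_sub_one_of_sq_sub_mul_sq_eq_one (mod_cast h)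
  have infinite_int : {r : ℤ | ∃ a : ℤ, f.eval (r : K) = (a : K) ^ 2 * (r : K)}.Infinite := by
    refine (infinite_setOf_exists_sq_sub_mul_sq_eq_one hd hsq).mono ?_
    rintro r ⟨s, h⟩
    exact ⟨d * s, eval_of_pell r s h⟩
  refine ⟨?_, infinite_int, eval_of_pell⟩
  exact infinite_setOf_iterate_eq_zpow_mul (n := 1) le_rfl two_ne_zero (by norm_num) infinite_int

theorem stmt_10 (f : Polynomial ℚ) (hf : f = C 2 * X * (X ^ 2 - 1)) :
    {α : ℚ | ∃ (n : ℕ) (ℓ : ℤ) (a : ℤ), 1 ≤ n ∧ ℓ ≠ 0 ∧ ℓ ≠ 1 ∧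
      (ℓ < 0 → (a : ℚ) ≠ 0) ∧ f.eval^[n] α = (a : ℚ) ^ ℓ * α}.Infinite ∧
    {r : ℤ | ∃ a : ℤ, f.eval (r : ℚ) = (a : ℚ) ^ 2 * (r : ℚ)}.Infinite ∧
    ∀ r s : ℤ, r ^ 2 - 2 * s ^ 2 = 1 →
      f.eval (r : ℚ) = ((2 * s : ℤ) : ℚ) ^ 2 * (r : ℚ) :=
  stmt_10_general two_pos Int.prime_two.not_isSquare f hf
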